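/- arXiv:1409.5640 — 2 statements merged into one kernel-verified Lean document; each statement's English description precedes it below -/
import Mathlib

section
/- Let λ > 0, let W have the Skellam(λ,λ) distribution, and define H(n) = P(W > n)/P(W = n) for n ∈ ℤ. Then for every integer m ≥ 0, 0 ≤ H(m) − H(m+1) ≤ 1. -/
/-!
Write `p` for the mass function of `W`, `q n = P(W > n)`, and `a` for the Poisson mass function
extended by zero to `ℤ`, so that `p k = ∑ u, a (k + u) * a u`.

The Poisson mass function is log-concave (`poissonZ_cross`), and log-concavity passes to `p` by the
basic composition formula (Cauchy–Binet): `2 (p k ^ 2 - p (k-1) p (k+1))` is a double sum of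
products of two `2 × 2` minors of `a`, which have the same sign (`autocorr_logConcave`).
Hence `p (m+1) / p m` is decreasing in `m`. This gives the two facts that carry the theorem:

* `p m * p (m+1+j) ≤ p (m+1) * p (m+j)` for `j ≥ 0`, which summed over `j ≥ 1` is
  `p m * q (m+1) ≤ p (m+1) * q m`, that is `H (m+1) ≤ H m`;
* with the symmetry `p (-1) = p 1`, log-concavity at `0` gives `p 1 ≤ p 0`, hence
  `p (m+1) ≤ p m` for all `m ≥ 0`. As `q m = p (m+1) + q (m+1)`,
  `H m - H (m+1) = p (m+1) / p m + q (m+1) * (1 / p m - 1 / p (m+1)) ≤ 1`.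
-/

open MeasureTheory ProbabilityTheory Real

/-- The Skellam distribution: law of `X - Y` for `X, Y` independent Poisson random
variables with rates `l1` and `l2`. -/
noncomputable def skellamMeasure (l1 l2 : ℝ) : Measure ℤ :=
  ((poissonMeasure l1.toNNReal).prod (poissonMeasure l2.toNNReal)).map
    (fun p => (p.1 : ℤ) - (p.2 : ℤ))

/-- Kolmogorov–Smirnov distance between two real random variables on `Ω`. -/
noncomputable def dKS {Ω : Type*} [MeasurableSpace Ω] (μ : Measure Ω) (X Z : Ω → ℝ) : ℝ :=
  ⨆ x : ℝ, |(μ {ω | X ω ≤ x}).toReal - (μ {ω | Z ω ≤ x}).toReal|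

/-- Kolmogorov–Smirnov distance between two distributions on `ℤ`. -/
noncomputable def dKSZ (μ1 μ2 : Measure ℤ) : ℝ :=
  ⨆ x : ℝ, |(μ1 {k : ℤ | (k : ℝ) ≤ x}).toReal - (μ2 {k : ℤ | (k : ℝ) ≤ x}).toReal|

/-- Kolmogorov–Smirnov distance between two distributions on `ℝ`. -/
noncomputable def dKSR (μ1 μ2 : Measure ℝ) : ℝ :=
  ⨆ x : ℝ, |(μ1 {y : ℝ | y ≤ x}).toReal - (μ2 {y : ℝ | y ≤ x}).toReal|

/-- Modified Bessel function of the first kind, of integer order `k`. -/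
noncomputable def besselI (k : ℤ) (z : ℝ) : ℝ :=
  ∑' j : ℕ, (z / 2) ^ (2 * j + k.natAbs) /
    ((Nat.factorial j : ℝ) * (Nat.factorial (j + k.natAbs) : ℝ))

/-- The autocorrelation `p k = ∑ u, a (k + u) * a u` of a nonnegative log-concave sequence
on `ℤ` is log-concave. The hypothesis `hc` is log-concavity in cross-product form, which also
excludes internal zeros. -/
lemma autocorr_logConcave {a p : ℤ → ℝ} (ha : ∀ z, 0 ≤ a z)
    (hc : ∀ u v, u ≤ v → a u * a (v + 1) ≤ a (u + 1) * a v)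
    (hp : ∀ k, HasSum (fun u => a (k + u) * a u) (p k)) (k : ℤ) :
    p (k - 1) * p (k + 1) ≤ p k * p k := by
  have h1 : HasSum (fun u => a (k + u) * a (u + 1)) (p (k - 1)) := by
    have h := (Equiv.addRight (1 : ℤ)).hasSum_iff.mpr (hp (k - 1))
    convert h using 2 with u
    simp [show k - 1 + (u + 1) = k + u by ring]
  have h2 : HasSum (fun u => a (k + 1 + u) * a u) (p (k + 1)) := hp (k + 1)
  have h3 : HasSum (fun u => a (k + 1 + u) * a (u + 1)) (p k) := by
    have h := (Equiv.addRight (1 : ℤ)).hasSum_iff.mpr (hp k)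
    convert h using 2 with u
    simp [show k + (u + 1) = k + 1 + u by ring]
  have nn : ∀ b c : ℤ → ℤ, (0 : ℤ → ℝ) ≤ fun u => a (b u) * a (c u) :=
    fun b c u => mul_nonneg (ha _) (ha _)
  have hA := (hp k).mul h3 ((hp k).summable.mul_of_nonneg h3.summable
    (nn _ _) (nn _ _))
  have hB := h1.mul h2 (h1.summable.mul_of_nonneg h2.summable (nn _ _) (nn _ _))
  have hD := hA.sub hB
  have hS := hD.add ((Equiv.prodComm ℤ ℤ).hasSum_iff.mpr hD)
  -- After symmetrisation in `(u, v)` each term is a product of two minors of `a`.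
  have key := hS.nonneg (fun x => by
    obtain ⟨u, v⟩ := x
    simp only [Function.comp, Equiv.prodComm_apply, Prod.swap]
    have e : a (k + u) * a u * (a (k + 1 + v) * a (v + 1))
          - a (k + u) * a (u + 1) * (a (k + 1 + v) * a v)
        + (a (k + v) * a v * (a (k + 1 + u) * a (u + 1))
          - a (k + v) * a (v + 1) * (a (k + 1 + u) * a u))
        = (a (k + u + 1) * a (k + v) - a (k + u) * a (k + v + 1))
          * (a (u + 1) * a v - a u * a (v + 1)) := by
      rw [show k + 1 + u = k + u + 1 by ring, show k + 1 + v = k + v + 1 by ring]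
      ring
    rw [e]
    rcases le_total u v with h | h
    · have i1 := hc u v h
      have i2 := hc (k + u) (k + v) (by omega)
      exact mul_nonneg (by linarith) (by linarith)
    · have i1 := hc v u h
      have i2 := hc (k + v) (k + u) (by omega)
      exact mul_nonneg_of_nonpos_of_nonpos (by linarith) (by linarith))
  linarith

/-- The Poisson law of mean `l`, as a measure on `ℤ`. -/
noncomputable def poissonZ (l : ℝ) : Measure ℤ :=
  (poissonMeasure l.toNNReal).map (fun n : ℕ => (n : ℤ))

instance (l : ℝ) : IsProbabilityMeasure (poissonZ l) :=
  Measure.isProbabilityMeasure_map .of_discrete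

lemma poissonZ_neg (l : ℝ) {z : ℤ} (hz : z < 0) : (poissonZ l).real {z} = 0 := by
  rw [poissonZ, map_measureReal_apply .of_discrete (by simp)]
  have : (fun n : ℕ => (n : ℤ)) ⁻¹' {z} = ∅ := by
    ext n
    simp
    omega
  simp [this]

lemma poissonZ_nat {l : ℝ} (hl : 0 < l) (n : ℕ) :
    (poissonZ l).real {(n : ℤ)} = exp (-l) * l ^ n / n.factorial := by
  rw [poissonZ, map_measureReal_apply .of_discrete (by simp)]
  have : (fun n : ℕ => (n : ℤ)) ⁻¹' {(n : ℤ)} = {n} := by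
    ext m
    simp
  rw [this, poissonMeasure_real_singleton, Real.coe_toNNReal _ hl.le]

lemma poissonZ_pos {l : ℝ} (hl : 0 < l) {z : ℤ} (hz : 0 ≤ z) : 0 < (poissonZ l).real {z} := by
  lift z to ℕ using hz
  rw [poissonZ_nat hl]
  positivity

lemma poissonZ_succ {l : ℝ} (hl : 0 < l) {z : ℤ} (hz : 0 ≤ z) :
    ((z : ℝ) + 1) * (poissonZ l).real {z + 1} = l * (poissonZ l).real {z} := by
  lift z to ℕ using hz
  have := poissonZ_nat hl (z + 1)
  push_cast at this
  rw [this, poissonZ_nat hl, Nat.factorial_succ]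
  push_cast
  field_simp
  ring

/-- Log-concavity of the Poisson mass function, in cross-product form. -/
lemma poissonZ_cross {l : ℝ} (hl : 0 < l) (u v : ℤ) (h : u ≤ v) :
    (poissonZ l).real {u} * (poissonZ l).real {v + 1} ≤
      (poissonZ l).real {u + 1} * (poissonZ l).real {v} := by
  rcases lt_or_ge u 0 with hu | hu
  · rw [poissonZ_neg l hu, zero_mul]
    positivity
  have e1 := poissonZ_succ hl hu
  have e2 := poissonZ_succ hl (hu.trans h)
  have hu' : (0 : ℝ) ≤ u := by exact_mod_cast hu
  have h' : (u : ℝ) ≤ v := by exact_mod_cast h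
  have e1' : (poissonZ l).real {u + 1} = l * (poissonZ l).real {u} / (u + 1) := by
    rw [eq_div_iff (by positivity)]
    linarith
  have e2' : (poissonZ l).real {v + 1} = l * (poissonZ l).real {v} / (v + 1) := by
    rw [eq_div_iff (by linarith)]
    linarith
  have n1 : 0 ≤ l * (poissonZ l).real {u} * (poissonZ l).real {v} := by positivity
  calc _ = l * (poissonZ l).real {u} * (poissonZ l).real {v} / (v + 1) := by rw [e2']; ring
    _ ≤ l * (poissonZ l).real {u} * (poissonZ l).real {v} / (u + 1) := by gcongr
    _ = _ := by rw [e1']; ring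

lemma skellamMeasure_eq (l : ℝ) :
    skellamMeasure l l = ((poissonZ l).prod (poissonZ l)).map (fun p => p.1 - p.2) := by
  rw [poissonZ, Measure.map_prod_map _ _ .of_discrete .of_discrete,
    Measure.map_map .of_discrete .of_discrete]
  rfl

instance (l : ℝ) : IsProbabilityMeasure (skellamMeasure l l) := by
  rw [skellamMeasure_eq]
  exact Measure.isProbabilityMeasure_map .of_discrete

lemma hasSum_skellam (l : ℝ) (k : ℤ) :
    HasSum (fun u => (poissonZ l).real {k + u} * (poissonZ l).real {u})
      ((skellamMeasure l l).real {k}) := by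
  have h : skellamMeasure l l {k} = ∑' u, poissonZ l {k + u} * poissonZ l {u} := by
    rw [skellamMeasure_eq, Measure.map_apply .of_discrete (by simp),
      Measure.prod_apply_symm .of_discrete, lintegral_countable']
    congr 1 with u
    congr 2
    ext x
    simp [sub_eq_iff_eq_add]
  have hfin : ∑' u, poissonZ l {k + u} * poissonZ l {u} ≠ ⊤ := h ▸ measure_ne_top _ _
  rw [measureReal_def, h, ENNReal.tsum_toReal_eq fun u => ENNReal.ne_top_of_tsum_ne_top hfin u]
  convert (ENNReal.hasSum_toReal hfin) using 2 with u
  simp [measureReal_def]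

lemma skellam_pos {l : ℝ} (hl : 0 < l) (k : ℤ) : 0 < (skellamMeasure l l).real {k} := by
  refine lt_of_lt_of_le ?_ (le_hasSum (hasSum_skellam l k) |k| fun u _ => by positivity)
  exact mul_pos (poissonZ_pos hl (by have := neg_abs_le k; omega)) (poissonZ_pos hl (abs_nonneg k))

lemma skellam_symm (l : ℝ) (k : ℤ) :
    (skellamMeasure l l).real {-k} = (skellamMeasure l l).real {k} := by
  refine (hasSum_skellam l (-k)).unique ?_
  have h := (Equiv.addRight (-k)).hasSum_iff.mpr (hasSum_skellam l k)
  convert h using 2 with u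
  simp only [Function.comp, Equiv.coe_addRight]
  rw [show k + (u + -k) = u by ring, show -k + u = u + -k by ring, mul_comm]

lemma hasSum_tail (μ : Measure ℤ) [IsFiniteMeasure μ] (n : ℤ) :
    HasSum (fun j : ℕ => μ.real {n + 1 + (j : ℤ)}) (μ.real {k : ℤ | n < k}) := by
  have h : μ {k : ℤ | n < k} = ∑' j : ℕ, μ {n + 1 + (j : ℤ)} := by
    rw [← measure_iUnion _ (fun _ => by simp)]
    · congr 1
      ext k
      simp only [Set.mem_ofPred_eq, Set.mem_iUnion, Set.mem_singleton_iff]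
      constructor
      · intro hk
        exact ⟨(k - n - 1).toNat, by omega⟩
      · rintro ⟨j, hj⟩
        omega
    · intro i j hij
      simp only [Function.onFun, Set.disjoint_singleton]
      omega
  have hfin : ∑' j : ℕ, μ {n + 1 + (j : ℤ)} ≠ ⊤ := h ▸ measure_ne_top _ _
  rw [measureReal_def, h, ENNReal.tsum_toReal_eq fun u => measure_ne_top _ _]
  exact ENNReal.hasSum_toReal hfin

/-- For `W ~ Skellam(λ,λ)` and `H(n) = P(W > n)/P(W = n)`, for every
integer `m ≥ 0` one has `0 ≤ H(m) − H(m+1) ≤ 1`. -/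
theorem stmt_16 (l : ℝ) (hl : 0 < l)
    (H : ℤ → ℝ)
    (hH : ∀ n : ℤ, H n = (skellamMeasure l l {k : ℤ | n < k}).toReal /
      (skellamMeasure l l {n}).toReal)
    (m : ℤ) (hm : 0 ≤ m) :
    0 ≤ H m - H (m + 1) ∧ H m - H (m + 1) ≤ 1 := by
  set μ := skellamMeasure l l with hμ
  have hpos : ∀ k, 0 < μ.real {k} := skellam_pos hl
  have hlc : ∀ k, μ.real {k - 1} * μ.real {k + 1} ≤ μ.real {k} * μ.real {k} :=
    autocorr_logConcave (fun _ => measureReal_nonneg) (poissonZ_cross hl) (hasSum_skellam l)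
  have hcross : ∀ j : ℕ, μ.real {m} * μ.real {m + 1 + (j : ℤ)} ≤
      μ.real {m + 1} * μ.real {m + (j : ℤ)} := by
    intro j
    induction j with
    | zero => simp [mul_comm]
    | succ j ih =>
      have h := hlc (m + 1 + j)
      rw [show m + 1 + (j : ℤ) - 1 = m + j by ring] at h
      push_cast
      rw [show m + 1 + ((j : ℤ) + 1) = m + 1 + j + 1 by ring,
        show m + ((j : ℤ) + 1) = m + 1 + j by ring]
      refine le_of_mul_le_mul_right ?_ (hpos (m + j))
      calc _ = μ.real {m} * (μ.real {m + (j : ℤ)} * μ.real {m + 1 + (j : ℤ) + 1}) := by ring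
        _ ≤ μ.real {m} * (μ.real {m + 1 + (j : ℤ)} * μ.real {m + 1 + (j : ℤ)}) := by gcongr
        _ = μ.real {m} * μ.real {m + 1 + (j : ℤ)} * μ.real {m + 1 + (j : ℤ)} := by ring
        _ ≤ μ.real {m + 1} * μ.real {m + (j : ℤ)} * μ.real {m + 1 + (j : ℤ)} := by gcongr
        _ = _ := by ring
  have hanti : ∀ n : ℕ, μ.real {(n : ℤ) + 1} ≤ μ.real {(n : ℤ)} := by
    intro n
    induction n with
    | zero =>
      have h := hlc 0
      rw [zero_sub, zero_add, hμ, skellam_symm l 1, ← hμ] at h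
      have h' := (mul_self_le_mul_self_iff (hpos 1).le (hpos 0).le).mpr h
      simpa using h'
    | succ n ih =>
      have h := hlc ((n : ℤ) + 1)
      rw [add_sub_cancel_right] at h
      push_cast
      refine le_of_mul_le_mul_left ?_ (hpos n)
      exact h.trans (by gcongr)
  have hmono : μ.real {m + 1} ≤ μ.real {m} := by
    have h := hanti m.toNat
    rwa [Int.toNat_of_nonneg hm] at h
  have hm0 := hpos m
  have hm1 := hpos (m + 1)
  have htail := hasSum_tail μ m
  have htail' := hasSum_tail μ (m + 1)
  have hq : μ.real {k : ℤ | m < k} = μ.real {m + 1} + μ.real {k : ℤ | m + 1 < k} := by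
    rw [← measureReal_union (by simp) .of_discrete]
    congr 1
    ext k
    simp
    omega
  have hle : μ.real {m} * μ.real {k : ℤ | m + 1 < k} ≤
      μ.real {m + 1} * μ.real {k : ℤ | m < k} := by
    refine hasSum_le (fun j => ?_) (htail'.mul_left _) (htail.mul_left _)
    have h := hcross (j + 1)
    push_cast at h
    rw [show m + 1 + 1 + (j : ℤ) = m + 1 + (j + 1) by ring,
      show m + 1 + (j : ℤ) = m + (j + 1) by ring]
    exact h
  rw [hH m, hH (m + 1), ← measureReal_def, ← measureReal_def, ← measureReal_def,
    ← measureReal_def]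
  constructor
  · rw [sub_nonneg, div_le_div_iff₀ hm1 hm0]
    linarith
  · have h1 : μ.real {m + 1} / μ.real {m} ≤ 1 := (div_le_one hm0).mpr hmono
    have h2 : μ.real {k : ℤ | m + 1 < k} / μ.real {m} ≤
        μ.real {k : ℤ | m + 1 < k} / μ.real {m + 1} := by gcongr
    rw [hq, add_div]
    linarith
end

section
/- Let λ ≥ 1, let W have the Skellam(λ,λ) distribution, define H(n) = P(W > n)/P(W = n) for n ∈ ℤ, and write I_k for I_k(2λ), the modified Bessel function of the first kind of integer order k evaluated at 2λ. Then for every positive integer m, Σ_{n odd, 1 ≤ n ≤ m−1} H(n) · | I_{m+1} I_n/(I_{n+1} I_{n+2}) − I_m/I_{n+1} − I_{m+1}/I_{n+1} + I_m/I_{n−1} | ≤ 73. -/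
/-!
The proof uses only that `a k = I_k(2l)` is a positive sequence satisfying the recurrence
`a k - a (k + 2) = ((k + 1) / l) * a (k + 1)`. Write `r_k = a (k + 1) / a k`; the common factor
`exp (-2l)` cancels in `H(n)`, which is `(∑_{k > n} a k) / a n` (`skellam_hazard`).

The recurrence reads `r_k * ((k + 1) / l + r_{k+1}) = 1`, and `r_k → 0`. Running it downwards from
infinity shows that `r` is decreasing with values in `(0, 1]` (`gap_bounds`, `ratio_le_one`), and
hence `(n / l) r_n ≤ 1 - r_n ^ 2 ≤ ((n + 1) / l) r_n`.

The recurrence also turns the expression between the bars into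
`(a m / a (n + 1)) * (r_m (n + 1) / r_{n+1} - n r_{n-1}) / l`, and the two parts of the last
difference nearly cancel: its absolute value is at most `1 + n (1 - r_n) + n (1 - r_m)`
(`abs_term_le`). Comparing the tail with a geometric series gives `H(n) ≤ r_n / (1 - r_n)`, whence
`H(n) ≤ 2l/n`, `H(n) ≤ 4√l`, and `H(n) / l ≤ 8 (1 - r_n)` as soon as `n ≥ √l`. Three sums remain.

* The numbers `(1 - r_n) a m / a (n + 1)` telescope to at most `1` (`sum_telescope`).
* The indices `n < √l` contribute at most `√l * (4 / √l) = 4` (`sum_near_le`).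
* The numbers `(1 - r_m) a m / a (n + 1)` sum to at most `8`: Chebyshev's sum inequality reduces
  this to the telescoping sum (`sum_chebyshev`).

The total is at most `10 * 1 + 4 + 2 * 8 = 30`. The summation may run over all `n`, as the terms
with even `n` are nonnegative.
-/


open MeasureTheory ProbabilityTheory Real

/-! ### Bessel functions and the Skellam distribution -/

/-- A positive sequence satisfying the three-term recurrence
`a k - a (k + 2) = ((k + 1) / L) * a (k + 1)` of `k ↦ I_k(2L)`. Positivity singles out the
multiples of `I_k(2L)` among the solutions, so nothing else about Bessel functions is needed. -/
structure IsBesselSeq (L : ℝ) (a : ℕ → ℝ) : Prop where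
  pos : ∀ k, 0 < a k
  recur : ∀ k : ℕ, a k - a (k + 2) = ((k : ℝ) + 1) / L * a (k + 1)

lemma besselI_natCast (l : ℝ) (k : ℕ) : besselI (k : ℤ) (2 * l) =
    ∑' j : ℕ, l ^ (2 * j + k) / ((Nat.factorial j : ℝ) * (Nat.factorial (j + k) : ℝ)) := by
  have h : 2 * l / 2 = l := by ring
  simp [besselI, h]

lemma summable_bessel_terms {l : ℝ} (hl : 0 < l) (k : ℕ) : Summable fun j : ℕ =>
    l ^ (2 * j + k) / ((Nat.factorial j : ℝ) * (Nat.factorial (j + k) : ℝ)) := by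
  refine Summable.of_nonneg_of_le (fun j => by positivity) (fun j => ?_)
    ((Real.summable_pow_div_factorial (l ^ 2)).mul_left (l ^ k))
  have h1 : (1 : ℝ) ≤ (Nat.factorial (j + k) : ℝ) := by
    exact_mod_cast Nat.one_le_iff_ne_zero.mpr (Nat.factorial_ne_zero _)
  have h2 : (0 : ℝ) < (Nat.factorial j : ℝ) := by positivity
  rw [pow_add, pow_mul, mul_div_assoc', mul_comm ((l ^ 2) ^ j)]
  gcongr
  nlinarith

lemma isBesselSeq_besselI {l : ℝ} (hl : 0 < l) :
    IsBesselSeq l (fun k : ℕ => besselI (k : ℤ) (2 * l)) := by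
  constructor
  · intro k
    simp only [besselI_natCast]
    exact (summable_bessel_terms hl k).tsum_pos (fun j => by positivity) 0 (by positivity)
  · intro k
    simp only [besselI_natCast]
    have s0 := summable_bessel_terms hl k
    have s1 := summable_bessel_terms hl (k + 1)
    have s2 := summable_bessel_terms hl (k + 2)
    rw [s0.tsum_eq_zero_add, s1.tsum_eq_zero_add, mul_add, ← tsum_mul_left, add_sub_assoc,
      ← Summable.tsum_sub ((summable_nat_add_iff 1).2 s0) s2]
    congr 1
    · have : (Nat.factorial (k + 1) : ℝ) = (k + 1) * Nat.factorial k := by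
        exact_mod_cast Nat.factorial_succ k
      simp only [Nat.mul_zero, Nat.zero_add, Nat.factorial_zero, this, pow_succ]
      field_simp
    -- The term of index `j + 1` of `I_k` is paired with the term of index `j` of `I_{k+2}`.
    · refine tsum_congr fun j => ?_
      have e1 : (Nat.factorial (j + 1) : ℝ) = (j + 1) * Nat.factorial j := by
        exact_mod_cast Nat.factorial_succ j
      have e2 : (Nat.factorial (j + (k + 2)) : ℝ) = (j + k + 2) * Nat.factorial (j + (k + 1)) := by
        exact_mod_cast Nat.factorial_succ (j + (k + 1))
      have e3 : j + 1 + k = j + (k + 1) := by ring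
      have e4 : j + 1 + (k + 1) = j + (k + 2) := by ring
      have e5 : (0 : ℝ) < j + k + 2 := by positivity
      rw [e3, e4, e2, e1, show 2 * (j + 1) + k = 2 * j + k + 2 by ring,
        show 2 * (j + 1) + (k + 1) = 2 * j + k + 3 by ring,
        show 2 * j + (k + 2) = 2 * j + k + 2 by ring, pow_succ l (2 * j + k + 2)]
      field_simp
      ring

lemma skellamMeasure_singleton {l : ℝ} (hl : 0 < l) (n : ℕ) :
    skellamMeasure l l {(n : ℤ)} =
      ENNReal.ofReal (Real.exp (-(2 * l)) * besselI (n : ℤ) (2 * l)) := by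
  have hpre : (fun p : ℕ × ℕ => (p.1 : ℤ) - (p.2 : ℤ)) ⁻¹' {(n : ℤ)} =
      ⋃ b : ℕ, ({n + b} : Set ℕ) ×ˢ ({b} : Set ℕ) := by
    ext ⟨x, y⟩
    simp only [Set.mem_preimage, Set.mem_singleton_iff, Set.mem_iUnion, Set.mem_prod]
    constructor
    · intro h
      exact ⟨y, by omega, rfl⟩
    · rintro ⟨b, h1, h2⟩
      omega
  rw [skellamMeasure, Measure.map_apply (by fun_prop) (by measurability), hpre, measure_iUnion]
  · simp only [Measure.prod_prod, poissonMeasure_singleton, Real.coe_toNNReal l hl.le]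
    rw [besselI_natCast, ← tsum_mul_left, ENNReal.ofReal_tsum_of_nonneg]
    · refine tsum_congr fun b => ?_
      rw [← ENNReal.ofReal_mul (by positivity)]
      congr 1
      rw [show -(2 * l) = -l + -l by ring, Real.exp_add, add_comm n b]
      field_simp
      ring
    · intro b
      positivity
    · exact (summable_bessel_terms hl n).mul_left _
  · intro b c hbc
    rw [Function.onFun, Set.disjoint_left]
    rintro ⟨x, y⟩ h1 h2
    simp only [Set.mem_prod, Set.mem_singleton_iff] at h1 h2
    omega
  · intro b
    measurability

lemma skellamMeasure_tail {l : ℝ} (n : ℕ) :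
    skellamMeasure l l {k : ℤ | (n : ℤ) < k} =
      ∑' j : ℕ, skellamMeasure l l {((n + 1 + j : ℕ) : ℤ)} := by
  have hU : {k : ℤ | (n : ℤ) < k} = ⋃ j : ℕ, {((n + 1 + j : ℕ) : ℤ)} := by
    ext k
    simp only [Set.mem_ofPred_eq, Set.mem_iUnion, Set.mem_singleton_iff]
    constructor
    · intro h
      exact ⟨(k - n - 1).toNat, by omega⟩
    · rintro ⟨j, h⟩
      omega
  rw [hU, measure_iUnion]
  · intro b c hbc
    simp only [Function.onFun, Set.disjoint_singleton]
    omega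
  · intro b
    measurability

/-- The ratio `H(n) = P(W > n) / P(W = n)` as a quotient of Bessel sums: the common factor
`exp (-2l)` cancels. -/
lemma skellam_hazard {l : ℝ} (hl : 0 < l) (n : ℕ) :
    (skellamMeasure l l {k : ℤ | (n : ℤ) < k}).toReal / (skellamMeasure l l {(n : ℤ)}).toReal =
      (∑' j : ℕ, besselI ((n + 1 + j : ℕ) : ℤ) (2 * l)) / besselI (n : ℤ) (2 * l) := by
  have hp := (isBesselSeq_besselI hl).pos
  have hnn : ∀ k : ℕ, 0 ≤ Real.exp (-(2 * l)) * besselI (k : ℤ) (2 * l) := fun k =>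
    mul_nonneg (Real.exp_pos _).le (hp k).le
  rw [skellamMeasure_tail, skellamMeasure_singleton hl n,
    ENNReal.toReal_ofReal (hnn n), ENNReal.tsum_toReal_eq]
  · simp only [skellamMeasure_singleton hl, ENNReal.toReal_ofReal (hnn _), tsum_mul_left]
    exact mul_div_mul_left _ _ (Real.exp_pos _).ne'
  · intro j
    rw [skellamMeasure_singleton hl]
    exact ENNReal.ofReal_ne_top

/-! ### Ratios and tails of Bessel sequences -/

namespace IsBesselSeq

variable {L : ℝ} {a : ℕ → ℝ}

lemma ratio_pos (h : IsBesselSeq L a) (k : ℕ) : 0 < a (k + 1) / a k :=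
  div_pos (h.pos _) (h.pos _)

/-- The recurrence as a continued-fraction step for the ratios. -/
lemma ratio_mul (h : IsBesselSeq L a) (k : ℕ) :
    a (k + 1) / a k * (((k : ℝ) + 1) / L + a (k + 2) / a (k + 1)) = 1 := by
  have h0 := (h.pos k).ne'
  have h1 := (h.pos (k + 1)).ne'
  have hr : ((k : ℝ) + 1) / L * a (k + 1) + a (k + 2) = a k := by
    have := h.recur k
    linarith
  calc a (k + 1) / a k * (((k : ℝ) + 1) / L + a (k + 2) / a (k + 1))
      = (((k : ℝ) + 1) / L * a (k + 1) + a (k + 2)) / a k := by field_simp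
    _ = 1 := by rw [hr, div_self h0]

lemma ratio_le (h : IsBesselSeq L a) (hL : 0 < L) (k : ℕ) :
    a (k + 1) / a k ≤ L / ((k : ℝ) + 1) := by
  have h1 := h.ratio_mul k
  have h2 := h.ratio_pos (k + 1)
  have h3 := h.ratio_pos k
  have h4 : a (k + 1) / a k * (((k : ℝ) + 1) / L) ≤ 1 := by
    refine le_of_le_of_eq ?_ h1
    gcongr
    exact le_add_of_nonneg_right h2.le
  rw [le_div_iff₀ (by positivity)]
  calc a (k + 1) / a k * ((k : ℝ) + 1)
      = a (k + 1) / a k * (((k : ℝ) + 1) / L) * L := by field_simp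
    _ ≤ 1 * L := by gcongr
    _ = L := one_mul L

/-- The gap `d_k = r_k - r_{k+1}` satisfies `d_k = r_k r_{k+1} (1/L - d_{k+1})`, where
`r_k r_{k+1} ≤ 1`. The bounds `0 ≤ d_k ≤ 1/L` hold for large `k` because `r_k → 0`, and this
relation carries them down to every `k`. -/
lemma gap_bounds (h : IsBesselSeq L a) (hL : 0 < L) (k : ℕ) :
    a (k + 2) / a (k + 1) ≤ a (k + 1) / a k ∧
      a (k + 1) / a k - a (k + 2) / a (k + 1) ≤ 1 / L := by
  have step : ∀ k : ℕ, a (k + 1) / a k - a (k + 2) / a (k + 1) =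
      a (k + 1) / a k * (a (k + 2) / a (k + 1)) *
        (1 / L - (a (k + 2) / a (k + 1) - a (k + 3) / a (k + 2))) := by
    intro k
    have e0 := h.ratio_mul k
    have e1 := h.ratio_mul (k + 1)
    simp only [add_assoc] at e1
    norm_num at e1
    linear_combination (a (k + 2) / a (k + 1)) * e0 - (a (k + 1) / a k) * e1
  have prod_le : ∀ k : ℕ, a (k + 1) / a k * (a (k + 2) / a (k + 1)) ≤ 1 := by
    intro k
    have e0 := h.ratio_mul k
    have := h.ratio_pos k
    have : 0 ≤ a (k + 1) / a k * (((k : ℝ) + 1) / L) := by positivity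
    linarith
  have down : ∀ k : ℕ, a (k + 2) / a (k + 1) - a (k + 3) / a (k + 2) ≤ 1 / L →
      a (k + 2) / a (k + 1) ≤ a (k + 1) / a k := by
    intro k hk
    have e := step k
    have p1 := h.ratio_pos k
    have p2 := h.ratio_pos (k + 1)
    have : 0 ≤ a (k + 1) / a k * (a (k + 2) / a (k + 1)) *
        (1 / L - (a (k + 2) / a (k + 1) - a (k + 3) / a (k + 2))) :=
      mul_nonneg (mul_pos p1 p2).le (by linarith)
    linarith
  have far : ∀ k : ℕ, L ^ 2 ≤ k → a (k + 1) / a k - a (k + 2) / a (k + 1) ≤ 1 / L := by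
    intro k hk
    have h1 := h.ratio_le hL k
    have h2 : 0 < a (k + 2) / a (k + 1) := h.ratio_pos (k + 1)
    have h3 : L / ((k : ℝ) + 1) ≤ 1 / L := by
      rw [div_le_div_iff₀ (by positivity) hL]
      nlinarith
    linarith
  obtain ⟨N, hN⟩ := exists_nat_ge (L ^ 2)
  have far_both : ∀ k : ℕ, N ≤ k → a (k + 2) / a (k + 1) ≤ a (k + 1) / a k ∧
      a (k + 1) / a k - a (k + 2) / a (k + 1) ≤ 1 / L := by
    intro k hk
    have hk' : (N : ℝ) ≤ k := by exact_mod_cast hk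
    refine ⟨down k (far (k + 1) ?_), far k (by linarith)⟩
    push_cast
    linarith
  have back : ∀ i k : ℕ, N ≤ k + i → a (k + 2) / a (k + 1) ≤ a (k + 1) / a k ∧
      a (k + 1) / a k - a (k + 2) / a (k + 1) ≤ 1 / L := by
    intro i
    induction i with
    | zero => exact far_both
    | succ i ih =>
      intro k hk
      obtain ⟨g1, g2⟩ := ih (k + 1) (by omega)
      refine ⟨down k g2, ?_⟩
      have g1' : a (k + 3) / a (k + 2) ≤ a (k + 2) / a (k + 1) := g1
      have g2' : a (k + 2) / a (k + 1) - a (k + 3) / a (k + 2) ≤ 1 / L := g2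
      rw [step k]
      have q := prod_le k
      have : 0 ≤ 1 / L - (a (k + 2) / a (k + 1) - a (k + 3) / a (k + 2)) := by linarith
      nlinarith
  exact back N k (by omega)

lemma ratio_antitone (h : IsBesselSeq L a) (hL : 0 < L) : Antitone fun k => a (k + 1) / a k :=
  antitone_nat_of_succ_le fun k => (h.gap_bounds hL k).1

lemma ratio_le_one (h : IsBesselSeq L a) (hL : 0 < L) (k : ℕ) : a (k + 1) / a k ≤ 1 := by
  refine (h.ratio_antitone hL (Nat.zero_le k)).trans ?_
  -- At index `0` the gap bound `r_0 ≤ 1/L + r_1` and the recurrence give `r_0 ^ 2 ≤ 1`.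
  have h1 := h.ratio_mul 0
  have h2 := (h.gap_bounds hL 0).2
  have h3 := h.ratio_pos 0
  norm_num at h1 h2 h3 ⊢
  have : a 1 / a 0 * (a 1 / a 0) ≤ 1 := by
    refine le_of_le_of_eq ?_ h1
    gcongr
  nlinarith

/-- `(n / L) r_n ≤ 1 - r_n ^ 2`. -/
lemma ratio_upper (h : IsBesselSeq L a) (hL : 0 < L) (n : ℕ) :
    (n : ℝ) / L * (a (n + 1) / a n) ≤ 1 - (a (n + 1) / a n) ^ 2 := by
  have h3 := h.ratio_pos n
  rcases n with _ | n
  · have := h.ratio_le_one hL 0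
    norm_num at this h3 ⊢
    exact abs_le.2 ⟨by linarith, this⟩
  · have h1 := h.ratio_mul n
    have h2 := (h.gap_bounds hL n).1
    have h4 : a (n + 1 + 1) / a (n + 1) = a (n + 2) / a (n + 1) := rfl
    rw [h4] at h3 ⊢
    push_cast
    have : a (n + 2) / a (n + 1) * (((n : ℝ) + 1) / L + a (n + 2) / a (n + 1)) ≤ 1 := by
      refine le_of_le_of_eq ?_ h1
      have h5 := (h.ratio_pos n).le
      gcongr
    linarith

/-- `1 - r_n ^ 2 ≤ ((n + 1) / L) r_n`. -/
lemma ratio_lower (h : IsBesselSeq L a) (hL : 0 < L) (n : ℕ) :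
    1 - (a (n + 1) / a n) ^ 2 ≤ ((n : ℝ) + 1) / L * (a (n + 1) / a n) := by
  have h1 := h.ratio_mul n
  have h2 := (h.gap_bounds hL n).1
  have h3 := h.ratio_pos n
  have : 1 ≤ a (n + 1) / a n * (((n : ℝ) + 1) / L + a (n + 1) / a n) := by
    refine le_of_eq_of_le h1.symm ?_
    gcongr
  linarith

lemma ratio_lt_one (h : IsBesselSeq L a) (hL : 0 < L) {n : ℕ} (hn : 1 ≤ n) :
    a (n + 1) / a n < 1 := by
  have h1 := h.ratio_upper hL n
  have h3 := h.ratio_pos n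
  have hn' : (0 : ℝ) < n := by exact_mod_cast hn
  have : 0 < (n : ℝ) / L * (a (n + 1) / a n) := by positivity
  nlinarith

lemma apply_add_le (h : IsBesselSeq L a) (hL : 0 < L) (n j : ℕ) :
    a (n + j) ≤ a n * (a (n + 1) / a n) ^ j := by
  induction j with
  | zero => simp
  | succ j ih =>
    have h1 : a (n + j + 1) / a (n + j) ≤ a (n + 1) / a n :=
      h.ratio_antitone hL (Nat.le_add_right n j)
    rw [div_le_iff₀ (h.pos _)] at h1
    have h3 := (h.ratio_pos n).le
    calc a (n + (j + 1)) = a (n + j + 1) := rfl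
      _ ≤ a (n + 1) / a n * a (n + j) := h1
      _ ≤ a (n + 1) / a n * (a n * (a (n + 1) / a n) ^ j) := by gcongr
      _ = _ := by ring

lemma tail_summable (h : IsBesselSeq L a) (hL : 0 < L) (n : ℕ) :
    Summable fun j => a (n + 1 + j) := by
  refine Summable.of_nonneg_of_le (fun j => (h.pos _).le)
    (fun j => h.apply_add_le hL (n + 1) j) ?_
  exact (summable_geometric_of_lt_one (h.ratio_pos _).le
    (h.ratio_lt_one hL (Nat.le_add_left 1 n))).mul_left _

lemma tail_nonneg (h : IsBesselSeq L a) (n : ℕ) : 0 ≤ (∑' j, a (n + 1 + j)) / a n :=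
  div_nonneg (tsum_nonneg fun _ => (h.pos _).le) (h.pos n).le

/-- The geometric bound on the tail: `H(n) (1 - r_n) ≤ r_n`. -/
lemma tail_geometric (h : IsBesselSeq L a) (hL : 0 < L) {n : ℕ} (hn : 1 ≤ n) :
    (∑' j, a (n + 1 + j)) / a n * (1 - a (n + 1) / a n) ≤ a (n + 1) / a n := by
  have h0 := h.pos n
  have hlt := h.ratio_lt_one hL hn
  have hg := summable_geometric_of_lt_one (h.ratio_pos n).le hlt
  have hle : ∑' j, a (n + 1 + j) ≤ ∑' j, a (n + 1) * (a (n + 1) / a n) ^ j := by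
    refine (h.tail_summable hL n).tsum_le_tsum (fun j => ?_) (hg.mul_left _)
    have := h.apply_add_le hL n (1 + j)
    rw [← add_assoc] at this
    refine this.trans (le_of_eq ?_)
    rw [pow_add, pow_one]
    field_simp
  rw [tsum_mul_left, tsum_geometric_of_lt_one (h.ratio_pos n).le hlt, ← div_eq_mul_inv,
    le_div_iff₀ (by linarith)] at hle
  rw [div_mul_eq_mul_div]
  gcongr

/-- `H(n) ≤ 2L/n`. -/
lemma tail_le (h : IsBesselSeq L a) (hL : 0 < L) {n : ℕ} (hn : 1 ≤ n) :
    (n : ℝ) / L * ((∑' j, a (n + 1 + j)) / a n) ≤ 2 := by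
  have h1 := h.tail_geometric hL hn
  have h2 := h.ratio_upper hL n
  have h3 := h.ratio_lt_one hL hn
  have h4 := h.ratio_pos n
  have h5 := h.tail_nonneg n
  set T := (∑' j, a (n + 1 + j)) / a n
  set r := a (n + 1) / a n
  have : (n : ℝ) / L * T * r ≤ 2 * r := by
    calc (n : ℝ) / L * T * r = T * ((n : ℝ) / L * r) := by ring
      _ ≤ T * (1 - r ^ 2) := by gcongr
      _ = (T * (1 - r)) * (1 + r) := by ring
      _ ≤ r * (1 + r) := by gcongr
      _ ≤ 2 * r := by nlinarith
  exact le_of_mul_le_mul_right this h4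

lemma apply_antitone (h : IsBesselSeq L a) (hL : 0 < L) : Antitone a :=
  antitone_nat_of_succ_le fun k => (div_le_one (h.pos k)).1 (h.ratio_le_one hL k)

/-- Uniform bound on `H(n)`: for every `K ≥ 1`, the first `K` terms of the tail are at most `a n`
and `tail_le` bounds the rest, so `H(n) ≤ K + 2L/K`. Here `K = ⌈√L⌉`. -/
lemma tail_le_sqrt (h : IsBesselSeq L a) (hL : 1 ≤ L) (n : ℕ) :
    (∑' j, a (n + 1 + j)) / a n ≤ 4 * √L := by
  have hL0 : 0 < L := by linarith
  have hs1 : 1 ≤ √L := Real.one_le_sqrt.2 hL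
  have hss : √L * √L = L := Real.mul_self_sqrt hL0.le
  set K := ⌈√L⌉₊ with hK
  have hK1 : √L ≤ K := Nat.le_ceil _
  have hK2 : (K : ℝ) < √L + 1 := Nat.ceil_lt_add_one (by positivity)
  have hKpos : 1 ≤ K := by
    have : (1 : ℝ) ≤ K := hs1.trans hK1
    exact_mod_cast this
  have hsplit := (h.tail_summable hL0 n).sum_add_tsum_nat_add K
  have hhead : ∑ j ∈ Finset.range K, a (n + 1 + j) ≤ K * a n := by
    have := Finset.sum_le_card_nsmul (Finset.range K) (fun j => a (n + 1 + j)) (a n)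
      (fun j _ => h.apply_antitone hL0 (by omega))
    simpa using this
  have hrest : ∑' j, a (n + 1 + (j + K)) ≤ 2 * √L * a n := by
    have h1 := h.tail_le hL0 (n := n + K) (by omega)
    have h2 : ∑' j, a (n + 1 + (j + K)) = ∑' j, a (n + K + 1 + j) :=
      tsum_congr fun j => by congr 1; omega
    have h3 := h.pos (n + K)
    have h4 : a (n + K) ≤ a n := h.apply_antitone hL0 (by omega)
    have h5 : 0 ≤ ∑' j, a (n + K + 1 + j) := tsum_nonneg fun _ => (h.pos _).le
    rw [h2]
    set T := ∑' j, a (n + K + 1 + j)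
    have hcast : √L ≤ ((n + K : ℕ) : ℝ) := by
      push_cast
      have : (0 : ℝ) ≤ n := by positivity
      linarith
    have h6 : √L * T ≤ 2 * L * a (n + K) := by
      calc √L * T ≤ ((n + K : ℕ) : ℝ) * T := by gcongr
        _ = ((n + K : ℕ) : ℝ) / L * (T / a (n + K)) * (L * a (n + K)) := by field_simp
        _ ≤ 2 * (L * a (n + K)) := by gcongr
        _ = _ := by ring
    have h7 : √L * T ≤ √L * (2 * √L * a n) := by
      calc √L * T ≤ 2 * L * a (n + K) := h6
        _ ≤ 2 * L * a n := by gcongr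
        _ = √L * (2 * √L * a n) := by linear_combination (-2 * a n) * hss
    exact le_of_mul_le_mul_left h7 (by positivity)
  rw [div_le_iff₀ (h.pos n)]
  have := h.pos n
  nlinarith

/-- For `n ≥ √L` the weight `H(n)/L` is dominated by `1 - r_n`, whose sum against
`a m / a (n + 1)` telescopes. -/
lemma tail_le_far (h : IsBesselSeq L a) (hL : 1 ≤ L) {n : ℕ} (hn : 1 ≤ n) (hnL : L ≤ (n : ℝ) ^ 2) :
    (∑' j, a (n + 1 + j)) / a n / L ≤ 8 * (1 - a (n + 1) / a n) := by
  have hL0 : 0 < L := by linarith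
  have h1 := h.tail_geometric hL0 hn
  have h2 := h.ratio_upper hL0 n
  have h3 := h.ratio_lt_one hL0 hn
  have h4 := h.ratio_pos n
  set T := (∑' j, a (n + 1 + j)) / a n
  set r := a (n + 1) / a n
  have hn0 : (0 : ℝ) ≤ n := by positivity
  have key : r ≤ 8 * L * (1 - r) ^ 2 := by
    rcases le_total r (1 / 2) with hr | hr
    · nlinarith [mul_nonneg (sub_nonneg.2 hL) (sq_nonneg (1 - r))]
    · have e1 : (n : ℝ) * r ≤ L * (2 * (1 - r)) := by
        have : (n : ℝ) / L * r ≤ 2 * (1 - r) := by nlinarith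
        calc (n : ℝ) * r = L * ((n : ℝ) / L * r) := by field_simp
          _ ≤ _ := by gcongr
      have e2 : ((n : ℝ) * r) ^ 2 ≤ (L * (2 * (1 - r))) ^ 2 := by gcongr
      have e3 : L * r ^ 2 ≤ L * (4 * L * (1 - r) ^ 2) := by
        have : L * r ^ 2 ≤ (n : ℝ) ^ 2 * r ^ 2 := by gcongr
        nlinarith
      have e4 := le_of_mul_le_mul_left e3 hL0
      nlinarith
  rw [div_le_iff₀ hL0]
  have : T * (1 - r) ≤ 8 * (1 - r) * L * (1 - r) := by nlinarith
  exact le_of_mul_le_mul_right this (by linarith)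

/-! ### Bounding the sum -/

/-- The summand factors as `(a m / a (n + 1)) / L` times
`r_m (n + 1) / r_{n + 1} - n r_{n - 1}`. The two parts of this difference nearly cancel:
`r_m ≤ r_{n + 1}` bounds it above by `1 + n (1 - r_n)`, and `r_{n - 1}, r_{n + 1} ≤ 1` bound it
below by `-n (1 - r_m)`. -/
lemma abs_term_le (h : IsBesselSeq L a) (hL : 0 < L) {m n : ℕ} (hn : 1 ≤ n) (hnm : n + 1 ≤ m) :
    |a (m + 1) * a n / (a (n + 1) * a (n + 2)) - a m / a (n + 1) - a (m + 1) / a (n + 1)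
      + a m / a (n - 1)| ≤
    (1 + n * (1 - a (n + 1) / a n) + n * (1 - a (m + 1) / a m)) * (a m / a (n + 1) / L) := by
  have hQ : 0 ≤ a m / a (n + 1) / L := div_nonneg (div_pos (h.pos _) (h.pos _)).le hL.le
  obtain ⟨j, rfl⟩ : ∃ j, n = j + 1 := ⟨n - 1, by omega⟩
  have p0 := (h.pos j).ne'
  have p1 := (h.pos (j + 1)).ne'
  have p2 := (h.pos (j + 2)).ne'
  have p3 := (h.pos (j + 3)).ne'
  have pm := (h.pos m).ne'
  have hfac : a (m + 1) * a (j + 1) / (a (j + 1 + 1) * a (j + 1 + 2)) - a m / a (j + 1 + 1)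
      - a (m + 1) / a (j + 1 + 1) + a m / a (j + 1 - 1) =
      (a (m + 1) / a m / (a (j + 3) / a (j + 2)) * ((j : ℝ) + 2)
        - ((j : ℝ) + 1) * (a (j + 1) / a j)) * (a m / a (j + 2) / L) := by
    have e0 := h.recur j
    have e1 := h.recur (j + 1)
    simp only [add_assoc, add_tsub_cancel_right] at e0 e1 ⊢
    norm_num at e0 e1 ⊢
    field_simp at e0 e1 ⊢
    linear_combination (a (m + 1) * a j) * e1 - (a m * a (j + 3)) * e0
  rw [hfac, abs_mul, abs_of_nonneg (show 0 ≤ a m / a (j + 2) / L from hQ)]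
  refine mul_le_mul_of_nonneg_right ?_ hQ
  have r0 : a (j + 2) / a (j + 1) ≤ a (j + 1) / a j := (h.gap_bounds hL j).1
  have r0' : a (j + 1) / a j ≤ 1 := h.ratio_le_one hL j
  have r1' : a (j + 2) / a (j + 1) ≤ 1 := h.ratio_le_one hL (j + 1)
  have r2 : a (j + 3) / a (j + 2) ≤ 1 := h.ratio_le_one hL (j + 2)
  have r2p : 0 < a (j + 3) / a (j + 2) := h.ratio_pos (j + 2)
  have rmp := h.ratio_pos m
  have rm : a (m + 1) / a m ≤ a (j + 3) / a (j + 2) := h.ratio_antitone hL hnm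
  have rm1 := h.ratio_le_one hL m
  have q1 : a (m + 1) / a m / (a (j + 3) / a (j + 2)) ≤ 1 := (div_le_one r2p).2 rm
  have q2 : a (m + 1) / a m ≤ a (m + 1) / a m / (a (j + 3) / a (j + 2)) :=
    le_div_self rmp.le r2p r2
  have hj : (0 : ℝ) ≤ j := by positivity
  simp only [add_assoc, Nat.reduceAdd]
  set q := a (m + 1) / a m / (a (j + 3) / a (j + 2))
  set ρ := a (m + 1) / a m
  push_cast
  rw [abs_le]
  constructor <;> nlinarith

/-- One summand, with each part of `abs_term_le` weighted by the bound on `H(n)` suited to it. -/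
lemma weighted_term_le (h : IsBesselSeq L a) (hL : 1 ≤ L) {m n : ℕ} (hn : 1 ≤ n)
    (hnm : n + 1 ≤ m) :
    (∑' j, a (n + 1 + j)) / a n *
      |a (m + 1) * a n / (a (n + 1) * a (n + 2)) - a m / a (n + 1) - a (m + 1) / a (n + 1)
        + a m / a (n - 1)| ≤
    10 * ((1 - a (n + 1) / a n) * (a m / a (n + 1))) + (if (n : ℝ) < √L then 4 / √L else 0)
      + 2 * ((1 - a (m + 1) / a m) * (a m / a (n + 1))) := by
  have hL0 : 0 < L := by linarith
  have hT := h.tail_nonneg n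
  have hQ0 : 0 ≤ a m / a (n + 1) := (div_pos (h.pos _) (h.pos _)).le
  have hQ1 : a m / a (n + 1) ≤ 1 := (div_le_one (h.pos _)).2 (h.apply_antitone hL0 hnm)
  have h2 := h.tail_le hL0 hn
  have hr := sub_nonneg.2 (h.ratio_le_one hL0 n)
  have hρ := sub_nonneg.2 (h.ratio_le_one hL0 m)
  have hsplit : (∑' j, a (n + 1 + j)) / a n / L * (a m / a (n + 1)) ≤
      8 * ((1 - a (n + 1) / a n) * (a m / a (n + 1))) +
        (if (n : ℝ) < √L then 4 / √L else 0) := by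
    have hss : √L * √L = L := Real.mul_self_sqrt hL0.le
    split_ifs with hc
    · have e1 : (∑' j, a (n + 1 + j)) / a n / L ≤ 4 / √L := by
        rw [div_le_div_iff₀ hL0 (by positivity)]
        have := h.tail_le_sqrt hL n
        calc _ ≤ 4 * √L * √L := by gcongr
          _ = 4 * L := by rw [mul_assoc, hss]
      have e2 : (∑' j, a (n + 1 + j)) / a n / L * (a m / a (n + 1)) ≤ 4 / √L * 1 := by
        gcongr
      have e3 := mul_nonneg hr hQ0
      linarith
    · have e1 := h.tail_le_far hL hn (by rw [← hss]; nlinarith [not_lt.1 hc, Real.sqrt_nonneg L])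
      have := mul_le_mul_of_nonneg_right e1 hQ0
      linarith
  refine (mul_le_mul_of_nonneg_left (h.abs_term_le hL0 hn hnm) hT).trans ?_
  set T := (∑' j, a (n + 1 + j)) / a n
  set Q := a m / a (n + 1)
  set r := a (n + 1) / a n
  set ρ := a (m + 1) / a m
  have e1 : (n : ℝ) / L * T * ((1 - r) * Q) ≤ 2 * ((1 - r) * Q) :=
    mul_le_mul_of_nonneg_right h2 (mul_nonneg hr hQ0)
  have e2 : (n : ℝ) / L * T * ((1 - ρ) * Q) ≤ 2 * ((1 - ρ) * Q) :=
    mul_le_mul_of_nonneg_right h2 (mul_nonneg hρ hQ0)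
  calc T * ((1 + n * (1 - r) + n * (1 - ρ)) * (Q / L))
      = T / L * Q + (n : ℝ) / L * T * ((1 - r) * Q) + (n : ℝ) / L * T * ((1 - ρ) * Q) := by ring
    _ ≤ _ := by linarith

lemma sum_telescope (h : IsBesselSeq L a) {m : ℕ} (hm : 1 ≤ m) :
    ∑ n ∈ Finset.Ico 1 m, (1 - a (n + 1) / a n) * (a m / a (n + 1)) ≤ 1 := by
  have e : ∀ n ∈ Finset.Ico 1 m, (1 - a (n + 1) / a n) * (a m / a (n + 1)) =
      a m / a (n + 1) - a m / a n := by
    intro n _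
    have p0 := (h.pos n).ne'
    have p1 := (h.pos (n + 1)).ne'
    field_simp
  rw [Finset.sum_congr rfl e, Finset.sum_Ico_sub (fun n => a m / a n) hm, div_self (h.pos m).ne']
  linarith [div_pos (h.pos m) (h.pos 1)]

/-- A weak form of concavity of `n ↦ 1 - r_n`: up to a constant it lies above its chord. -/
lemma one_sub_ratio_ge (h : IsBesselSeq L a) (hL : 0 < L) {m n : ℕ} (hnm : n ≤ m) :
    (n : ℝ) * (1 - a (m + 1) / a m) ≤ 2 * (m + 1) * (1 - a (n + 1) / a n) := by
  have hu := h.ratio_upper hL n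
  have hl := h.ratio_lower hL m
  have p1 := h.ratio_pos n
  have p2 := h.ratio_pos m
  have l1 := h.ratio_le_one hL n
  have l2 := h.ratio_le_one hL m
  set r := a (n + 1) / a n
  set ρ := a (m + 1) / a m
  have hnm' : (n : ℝ) ≤ m := by exact_mod_cast hnm
  have hn0 : (0 : ℝ) ≤ n := by positivity
  rcases le_total r (1 / 2) with hr | hr
  · nlinarith
  · have e1 : (n : ℝ) / L ≤ 3 * (1 - r) := by
      have : (n : ℝ) / L * r ≤ 3 * (1 - r) * r := by nlinarith
      exact le_of_mul_le_mul_right this p1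
    have e2 : 2 * (1 - ρ) ≤ ((m : ℝ) + 1) / L := by
      have hx : 0 ≤ ((m : ℝ) + 1) / L := by positivity
      have : (1 - ρ) * (1 + ρ) ≤ ((m : ℝ) + 1) / L * ρ := by linarith
      have : 2 * (1 - ρ) * (1 + ρ) ≤ ((m : ℝ) + 1) / L * (1 + ρ) := by nlinarith
      exact le_of_mul_le_mul_right this (by linarith)
    have e3 : (n : ℝ) * (2 * (1 - ρ)) ≤ n * (((m : ℝ) + 1) / L) := by gcongr
    have e4 : (n : ℝ) * (((m : ℝ) + 1) / L) = (m + 1) * (n / L) := by ring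
    have e5 : ((m : ℝ) + 1) * (n / L) ≤ (m + 1) * (3 * (1 - r)) := by gcongr
    nlinarith

/-- Both `1 - r_n` and `a m / a (n + 1)` increase with `n`, so Chebyshev's sum inequality compares
the sum of `a m / a (n + 1)` with the telescoping sum; `one_sub_ratio_ge` bounds the average of
`1 - r_n` below by a multiple of `1 - r_m`. -/
lemma sum_chebyshev (h : IsBesselSeq L a) (hL : 0 < L) {m : ℕ} (hm : 1 ≤ m) :
    ∑ n ∈ Finset.Ico 1 m, (1 - a (m + 1) / a m) * (a m / a (n + 1)) ≤ 8 := by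
  rcases hm.eq_or_lt with rfl | hm2
  · simp
  have mono1 : Monotone fun n => 1 - a (n + 1) / a n := fun i j hij => by
    have : a (j + 1) / a j ≤ a (i + 1) / a i := h.ratio_antitone hL hij
    simp only
    linarith
  have mono2 : Monotone fun n => a m / a (n + 1) := fun i j hij =>
    div_le_div_of_nonneg_left (h.pos m).le (h.pos _) (h.apply_antitone hL (by omega))
  have cheb := ((mono1.monovary mono2).monovaryOn
    (Finset.Ico 1 m : Set ℕ)).sum_mul_sum_le_card_mul_sum
  have tel := h.sum_telescope hm
  rw [Nat.card_Ico] at cheb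
  have hm2' : (2 : ℝ) ≤ m := by exact_mod_cast hm2
  have hcast : ((m - 1 : ℕ) : ℝ) = (m : ℝ) - 1 := by push_cast [hm]; ring
  rw [hcast] at cheb
  have gauss : ∑ n ∈ Finset.Ico 1 m, (n : ℝ) = m * (m - 1) / 2 := by
    clear * - hm
    induction m, hm using Nat.le_induction with
    | base => simp
    | succ k hk ih =>
      rw [Finset.sum_Ico_succ_top hk, ih]
      push_cast
      ring
  have avg : (m : ℝ) * (m - 1) / 2 * (1 - a (m + 1) / a m) ≤
      2 * (m + 1) * ∑ n ∈ Finset.Ico 1 m, (1 - a (n + 1) / a n) := by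
    rw [← gauss, Finset.sum_mul, Finset.mul_sum]
    exact Finset.sum_le_sum fun n hn => h.one_sub_ratio_ge hL (Finset.mem_Ico.1 hn).2.le
  rw [← Finset.mul_sum]
  have hS0 : 0 ≤ ∑ n ∈ Finset.Ico 1 m, a m / a (n + 1) :=
    Finset.sum_nonneg fun n _ => (div_pos (h.pos _) (h.pos _)).le
  have hρ := sub_nonneg.2 (h.ratio_le_one hL m)
  set S := ∑ n ∈ Finset.Ico 1 m, a m / a (n + 1)
  set D := ∑ n ∈ Finset.Ico 1 m, (1 - a (n + 1) / a n)
  set δ := 1 - a (m + 1) / a m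
  have c1 : D * S ≤ (m : ℝ) - 1 := by nlinarith
  have c2 : (m : ℝ) * (m - 1) / 2 * (δ * S) ≤ 2 * (m + 1) * (m - 1) := by
    calc (m : ℝ) * (m - 1) / 2 * (δ * S) = (m : ℝ) * (m - 1) / 2 * δ * S := by ring
      _ ≤ 2 * (m + 1) * D * S := by gcongr
      _ = 2 * (m + 1) * (D * S) := by ring
      _ ≤ 2 * (m + 1) * (m - 1) := by gcongr
  have c3 : (m : ℝ) * (m - 1) / 2 * (δ * S) ≤ (m : ℝ) * (m - 1) / 2 * 8 := by nlinarith
  exact le_of_mul_le_mul_left c3 (by nlinarith)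

end IsBesselSeq

/-- At most `√L` positive integers lie below `√L`. -/
lemma sum_near_le {L : ℝ} (hL : 1 ≤ L) (m : ℕ) :
    ∑ n ∈ Finset.Ico 1 m, (if (n : ℝ) < √L then 4 / √L else 0) ≤ 4 := by
  have hs : 0 < √L := Real.sqrt_pos.2 (by linarith)
  rw [← Finset.sum_filter, Finset.sum_const, nsmul_eq_mul]
  have hsub : (Finset.Ico 1 m).filter (fun n : ℕ => (n : ℝ) < √L) ⊆ Finset.Icc 1 ⌊√L⌋₊ := by
    intro n hn
    rw [Finset.mem_filter, Finset.mem_Ico] at hn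
    exact Finset.mem_Icc.2 ⟨hn.1.1, Nat.le_floor hn.2.le⟩
  have hcard := Finset.card_le_card hsub
  rw [Nat.card_Icc, Nat.add_sub_cancel] at hcard
  have h1 : ((((Finset.Ico 1 m).filter (fun n : ℕ => (n : ℝ) < √L)).card : ℕ) : ℝ) ≤ √L :=
    (Nat.cast_le.2 hcard).trans (Nat.floor_le hs.le)
  calc _ ≤ √L * (4 / √L) := by gcongr
    _ = 4 := by field_simp

/-- For `λ ≥ 1`, `W ~ Skellam(λ,λ)`, `H(n) = P(W > n)/P(W = n)` and
`I_k = I_k(2λ)`, for every positive integer `m`,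
`Σ_{n odd, 1 ≤ n ≤ m−1} H(n)·|I_{m+1}I_n/(I_{n+1}I_{n+2}) − I_m/I_{n+1} − I_{m+1}/I_{n+1}
  + I_m/I_{n−1}| ≤ 73`. -/
theorem stmt_18 (l : ℝ) (hl : 1 ≤ l)
    (H : ℤ → ℝ)
    (hH : ∀ n : ℤ, H n = (skellamMeasure l l {k : ℤ | n < k}).toReal /
      (skellamMeasure l l {n}).toReal)
    (m : ℕ) (hm : 0 < m) :
    ∑ n ∈ (Finset.Icc 1 (m - 1)).filter (fun n => Odd n),
        H (n : ℤ) *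
          |besselI ((m : ℤ) + 1) (2 * l) * besselI (n : ℤ) (2 * l) /
              (besselI ((n : ℤ) + 1) (2 * l) * besselI ((n : ℤ) + 2) (2 * l))
            - besselI (m : ℤ) (2 * l) / besselI ((n : ℤ) + 1) (2 * l)
            - besselI ((m : ℤ) + 1) (2 * l) / besselI ((n : ℤ) + 1) (2 * l)
            + besselI (m : ℤ) (2 * l) / besselI ((n : ℤ) - 1) (2 * l)| ≤ 73 := by
  have hl0 : 0 < l := by linarith
  have hB := isBesselSeq_besselI hl0
  set a : ℕ → ℝ := fun k : ℕ => besselI (k : ℤ) (2 * l) with ha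
  have hIcc : Finset.Icc 1 (m - 1) = Finset.Ico 1 m := by
    ext n
    simp only [Finset.mem_Icc, Finset.mem_Ico]
    omega
  have hterm : ∀ n ∈ (Finset.Ico 1 m).filter (fun n => Odd n),
      H (n : ℤ) *
          |besselI ((m : ℤ) + 1) (2 * l) * besselI (n : ℤ) (2 * l) /
              (besselI ((n : ℤ) + 1) (2 * l) * besselI ((n : ℤ) + 2) (2 * l))
            - besselI (m : ℤ) (2 * l) / besselI ((n : ℤ) + 1) (2 * l)
            - besselI ((m : ℤ) + 1) (2 * l) / besselI ((n : ℤ) + 1) (2 * l)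
            + besselI (m : ℤ) (2 * l) / besselI ((n : ℤ) - 1) (2 * l)| =
      (∑' j, a (n + 1 + j)) / a n *
        |a (m + 1) * a n / (a (n + 1) * a (n + 2)) - a m / a (n + 1) - a (m + 1) / a (n + 1)
          + a m / a (n - 1)| := by
    intro n hn
    have hn1 : 1 ≤ n := (Finset.mem_Ico.1 (Finset.mem_filter.1 hn).1).1
    rw [hH, skellam_hazard hl0]
    simp only [ha]
    push_cast [hn1]
    rfl
  rw [hIcc, Finset.sum_congr rfl hterm]
  refine (Finset.sum_le_sum_of_subset_of_nonneg (Finset.filter_subset _ _)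
    fun n _ _ => mul_nonneg (hB.tail_nonneg n) (abs_nonneg _)).trans ?_
  refine (Finset.sum_le_sum fun n hn => hB.weighted_term_le hl (Finset.mem_Ico.1 hn).1
    (Finset.mem_Ico.1 hn).2).trans ?_
  rw [Finset.sum_add_distrib, Finset.sum_add_distrib, ← Finset.mul_sum, ← Finset.mul_sum]
  have s1 := hB.sum_telescope hm
  have s2 := sum_near_le hl m
  have s3 := hB.sum_chebyshev hl0 hm
  linarith
end
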